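/- A linear subspace V of J3(F2) is primitive with upper rank 2 if and only if for every pair (a,b) ∈ F2 × F2, V contains at least one matrix whose diagonal entries are (a, a+b, b), i.e., an upper-triangular matrix of the form [[a, ?, ?], [0, a+b, ?], [0, 0, b]]. -/

import Mathlib

/-!
The proof rests on one observation: if `M` is upper triangular and its diagonal entry at the
position of the last nonzero coordinate of `w` is `1`, then `M *ᵥ w ≠ 0`
(`mulVec_ne_zero_of_lastDiag`), and symmetrically for row vectors and the first nonzero
coordinate.

Suppose every diagonal `(a, a + b, b)` occurs in `V`. The nonzero vectors of a plane in `F₂³`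
have their last nonzero coordinates in just two positions `i < j`, and some diagonal
`(a, a + b, b)` is `1` at both, so some `M ∈ V` is injective on that plane. Since deleting the
last column of `P * M * Q` means restricting `M` to a plane, up to isomorphism, no equivalent
space drops in upper rank (`exists_dropCol_rank`); rows are treated in the same way
(`exists_dropRow_rank`). The same observation for single vectors shows that `V` is reduced, and
its upper rank is `2` because one of `a, a + b, b` is always `0` in `F₂`.

Conversely, if some diagonal is missing, then one diagonal position vanishes on all of `V`
(`fullDiag_of_exists`). If it is the first, all first columns vanish, and if it is the third,
all last rows vanish; then `V` is not reduced. If it is the second, deleting the last column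
leaves matrices supported on the first row, of rank at most `1`, so `V` is not primitive.
-/

open Matrix

/-- Two linear subspaces of `n × p` matrices over `K` are *equivalent* when one is obtained
from the other by multiplying on the left and on the right by fixed invertible matrices. -/
def MatEquiv (K : Type*) [Field K] {n p : ℕ}
    (V₁ V₂ : Submodule K (Matrix (Fin n) (Fin p) K)) : Prop :=
  ∃ (P : Matrix (Fin n) (Fin n) K) (Q : Matrix (Fin p) (Fin p) K),
    IsUnit P ∧ IsUnit Q ∧
      (V₂ : Set (Matrix (Fin n) (Fin p) K)) =
        (fun M => P * M * Q) '' (V₁ : Set (Matrix (Fin n) (Fin p) K))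

/-- A linear subspace of matrices is *reduced* when no nonzero vector is annihilated by every
matrix of the space, and the column spaces of the matrices of the space together span the
whole target space. -/
def Reduced (K : Type*) [Field K] {n p : ℕ}
    (V : Submodule K (Matrix (Fin n) (Fin p) K)) : Prop :=
  (∀ x : Fin p → K, (∀ M ∈ V, M.mulVec x = 0) → x = 0) ∧
  Submodule.span K {y : Fin n → K | ∃ M ∈ V, ∃ x : Fin p → K, M.mulVec x = y} = ⊤

/-- The *upper rank* of a linear subspace of matrices: the maximal rank of a matrix in it. -/
noncomputable def urk {K : Type*} [Field K] {n p : ℕ}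
    (V : Submodule K (Matrix (Fin n) (Fin p) K)) : ℕ :=
  sSup (Matrix.rank '' (V : Set (Matrix (Fin n) (Fin p) K)))

/-- The matrix obtained by deleting the last column. -/
def dropCol {K : Type*} [Field K] {n p : ℕ} (M : Matrix (Fin n) (Fin p) K) :
    Matrix (Fin n) (Fin (p - 1)) K :=
  M.submatrix id (Fin.castLE (Nat.sub_le p 1))

/-- The matrix obtained by deleting the last row. -/
def dropRow {K : Type*} [Field K] {n p : ℕ} (M : Matrix (Fin n) (Fin p) K) :
    Matrix (Fin (n - 1)) (Fin p) K :=
  M.submatrix (Fin.castLE (Nat.sub_le n 1)) id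

/-- A linear subspace of matrices (of upper rank `r = urk V`) is *semi-primitive* when it is
reduced and it is not equivalent to a subspace `T` such that the space obtained by deleting
the last column of each matrix of `T` has upper rank at most `r - 1`. -/
def SemiPrimitive (K : Type*) [Field K] {n p : ℕ}
    (V : Submodule K (Matrix (Fin n) (Fin p) K)) : Prop :=
  Reduced K V ∧
    ¬ ∃ T : Submodule K (Matrix (Fin n) (Fin p) K),
        MatEquiv K V T ∧ ∀ M ∈ T, (dropCol M).rank ≤ urk V - 1

/-- A linear subspace of matrices (of upper rank `r = urk V`) is *primitive* when it is
semi-primitive and it is not equivalent to a subspace `T` such that the space obtained by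
deleting the last row of each matrix of `T` has upper rank at most `r - 1`. -/
def Primitive (K : Type*) [Field K] {n p : ℕ}
    (V : Submodule K (Matrix (Fin n) (Fin p) K)) : Prop :=
  SemiPrimitive K V ∧
    ¬ ∃ T : Submodule K (Matrix (Fin n) (Fin p) K),
        MatEquiv K V T ∧ ∀ M ∈ T, (dropRow M).rank ≤ urk V - 1

/-- `J3(F2)`: the space of upper-triangular `3 × 3` matrices over `F2` with trace zero. -/
def J3 : Submodule (ZMod 2) (Matrix (Fin 3) (Fin 3) (ZMod 2)) where
  carrier := {M | M.trace = 0 ∧ ∀ i j : Fin 3, j < i → M i j = 0}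
  add_mem' := by
    rintro M N ⟨hM1, hM2⟩ ⟨hN1, hN2⟩
    refine ⟨by simp [Matrix.trace_add, hM1, hN1], ?_⟩
    intro i j h
    simp [Matrix.add_apply, hM2 i j h, hN2 i j h]
  zero_mem' := by
    refine ⟨by simp, ?_⟩
    intro i j h
    simp
  smul_mem' := by
    rintro c M ⟨hM1, hM2⟩
    refine ⟨by simp [Matrix.trace_smul, hM1], ?_⟩
    intro i j h
    simp [Matrix.smul_apply, hM2 i j h]

/-- The diagonal entry, among `a, a + b, b`, at the position of the last nonzero coordinate of
`w` (for `w = 0` the value is the junk value `a`). -/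
def lastDiag (a b : ZMod 2) (w : Fin 3 → ZMod 2) : ZMod 2 :=
  if w 2 ≠ 0 then b else if w 1 ≠ 0 then a + b else a

/-- Two independent vectors span a plane whose nonzero vectors have their last nonzero
coordinate in only two positions, and some diagonal `(a, a + b, b)` is `1` at both. -/
lemma exists_lastDiag_one_pair : ∀ v w : Fin 3 → ZMod 2, v ≠ 0 → w ≠ 0 → v + w ≠ 0 →
    ∃ a b : ZMod 2, lastDiag a b v = 1 ∧ lastDiag a b w = 1 ∧ lastDiag a b (v + w) = 1 := by
  unfold lastDiag
  decide +kernel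

/-- `exists_lastDiag_one_pair` for the plane spanned by the columns of an injective `W`. -/
lemma exists_lastDiag_one (W : Matrix (Fin 3) (Fin 2) (ZMod 2))
    (hW : ∀ u : Fin 2 → ZMod 2, u ≠ 0 → W *ᵥ u ≠ 0) :
    ∃ a b : ZMod 2, ∀ u : Fin 2 → ZMod 2, u ≠ 0 → lastDiag a b (W *ᵥ u) = 1 := by
  have h10 : W *ᵥ ![1, 0] = fun i => W i 0 := by
    ext i; simp [Matrix.mulVec, dotProduct, Fin.sum_univ_two]
  have h01 : W *ᵥ ![0, 1] = fun i => W i 1 := by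
    ext i; simp [Matrix.mulVec, dotProduct, Fin.sum_univ_two]
  have h11 : W *ᵥ ![1, 1] = (fun i => W i 0) + (fun i => W i 1) := by
    ext i; simp [Matrix.mulVec, dotProduct, Fin.sum_univ_two]
  obtain ⟨a, b, h1, h2, h3⟩ := exists_lastDiag_one_pair (fun i => W i 0) (fun i => W i 1)
    (h10 ▸ hW _ (by decide)) (h01 ▸ hW _ (by decide)) (h11 ▸ hW _ (by decide))
  refine ⟨a, b, fun u hu => ?_⟩
  have key : ∀ u : Fin 2 → ZMod 2, u ≠ 0 → u = ![1, 0] ∨ u = ![0, 1] ∨ u = ![1, 1] := by decide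
  rcases key u hu with rfl | rfl | rfl
  · rw [h10]; exact h1
  · rw [h01]; exact h2
  · rw [h11]; exact h3

/-- If the last nonzero coordinate of `w` meets a diagonal entry `1` of the upper-triangular
matrix `M`, then that coordinate survives in `M *ᵥ w`. -/
lemma mulVec_ne_zero_of_lastDiag {M : Matrix (Fin 3) (Fin 3) (ZMod 2)} (hM : M ∈ J3)
    {a b : ZMod 2} (h0 : M 0 0 = a) (h1 : M 1 1 = a + b) (h2 : M 2 2 = b)
    {w : Fin 3 → ZMod 2} (hw : w ≠ 0) (hd : lastDiag a b w = 1) : M *ᵥ w ≠ 0 := by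
  intro h
  have z10 := hM.2 1 0 (by decide)
  have z20 := hM.2 2 0 (by decide)
  have z21 := hM.2 2 1 (by decide)
  have e0 := congrFun h 0
  have e1 := congrFun h 1
  have e2 := congrFun h 2
  simp only [Matrix.mulVec, dotProduct, Fin.sum_univ_three, z10, z20, z21, h0, h1, h2,
    Pi.zero_apply, zero_mul, zero_add] at e0 e1 e2
  apply hw
  unfold lastDiag at hd
  split_ifs at hd with c2 c1
  · simp_all
  · simp_all
  · push Not at c1 c2
    ext i
    fin_cases i <;> simp_all

/-- The mirror image of `mulVec_ne_zero_of_lastDiag`: for row vectors it is the *first* nonzero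
coordinate that matters, which reversing `w` and swapping `a` and `b` turns into the last. -/
lemma vecMul_ne_zero_of_lastDiag {M : Matrix (Fin 3) (Fin 3) (ZMod 2)} (hM : M ∈ J3)
    {a b : ZMod 2} (h0 : M 0 0 = a) (h1 : M 1 1 = a + b) (h2 : M 2 2 = b)
    {w : Fin 3 → ZMod 2} (hw : w ≠ 0) (hd : lastDiag b a (w ∘ Fin.rev) = 1) : w ᵥ* M ≠ 0 := by
  intro h
  have z10 := hM.2 1 0 (by decide)
  have z20 := hM.2 2 0 (by decide)
  have z21 := hM.2 2 1 (by decide)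
  have e0 := congrFun h 0
  have e1 := congrFun h 1
  have e2 := congrFun h 2
  simp only [Matrix.vecMul, dotProduct, Fin.sum_univ_three, z10, z20, z21, h0, h1, h2,
    Pi.zero_apply, mul_zero, add_zero] at e0 e1 e2
  apply hw
  have r2 : Fin.rev (2 : Fin 3) = 0 := rfl
  have r1 : Fin.rev (1 : Fin 3) = 1 := rfl
  simp only [lastDiag, Function.comp, r1, r2, add_comm b a] at hd
  split_ifs at hd with c2 c1
  · simp_all
  · simp_all
  · push Not at c1 c2
    ext i
    fin_cases i <;> simp_all

lemma rank_eq_of_mulVec_ne_zero {m k : ℕ} (A : Matrix (Fin m) (Fin k) (ZMod 2))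
    (h : ∀ u : Fin k → ZMod 2, u ≠ 0 → A *ᵥ u ≠ 0) : A.rank = k := by
  have hinj : Function.Injective A.mulVecLin := by
    rw [← LinearMap.ker_eq_bot, LinearMap.ker_eq_bot']
    intro u hu
    by_contra hne
    exact h u hne hu
  rw [Matrix.rank, LinearMap.finrank_range_of_inj hinj]
  simp

lemma mulVec_ne_zero_of_isUnit {n : ℕ} {P : Matrix (Fin n) (Fin n) (ZMod 2)} (hP : IsUnit P)
    {v : Fin n → ZMod 2} (hv : v ≠ 0) : P *ᵥ v ≠ 0 := fun h =>
  hv (Matrix.mulVec_injective_of_isUnit hP (by simpa using h))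

lemma vecMul_ne_zero_of_isUnit {n : ℕ} {P : Matrix (Fin n) (Fin n) (ZMod 2)} (hP : IsUnit P)
    {v : Fin n → ZMod 2} (hv : v ≠ 0) : v ᵥ* P ≠ 0 := fun h =>
  hv (Matrix.vecMul_injective_of_isUnit hP (by simpa using h))

lemma snoc_zero_ne_zero {u : Fin 2 → ZMod 2} (hu : u ≠ 0) : ![u 0, u 1, 0] ≠ 0 := by
  revert u; decide

lemma dropCol_mulVec (N : Matrix (Fin 3) (Fin 3) (ZMod 2)) (u : Fin 2 → ZMod 2) :
    dropCol N *ᵥ u = N *ᵥ ![u 0, u 1, 0] := by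
  ext i
  simp only [Matrix.mulVec, dotProduct, Fin.sum_univ_three]
  erw [Fin.sum_univ_two]
  simp [dropCol]

lemma vecMul_dropRow (N : Matrix (Fin 3) (Fin 3) (ZMod 2)) (u : Fin 2 → ZMod 2) :
    u ᵥ* dropRow N = ![u 0, u 1, 0] ᵥ* N := by
  ext i
  simp only [Matrix.vecMul, dotProduct, Fin.sum_univ_three]
  erw [Fin.sum_univ_two]
  simp [dropRow]

/-- `V` realizes every diagonal `(a, a + b, b)`. -/
def FullDiag (V : Submodule (ZMod 2) (Matrix (Fin 3) (Fin 3) (ZMod 2))) : Prop :=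
  ∀ a b : ZMod 2, ∃ M ∈ V, M 0 0 = a ∧ M 1 1 = a + b ∧ M 2 2 = b

section FullDiag

variable {V : Submodule (ZMod 2) (Matrix (Fin 3) (Fin 3) (ZMod 2))}

/-- Deleting the last column of `P * M * Q` amounts to restricting `M` to the plane spanned by
the first two columns of `Q`; some `M ∈ V` is injective there. -/
lemma exists_dropCol_rank (hV : V ≤ J3) (h : FullDiag V)
    {P Q : Matrix (Fin 3) (Fin 3) (ZMod 2)} (hP : IsUnit P) (hQ : IsUnit Q) :
    ∃ M ∈ V, (dropCol (P * M * Q)).rank = 2 := by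
  have hW : ∀ u : Fin 2 → ZMod 2, u ≠ 0 → dropCol Q *ᵥ u ≠ 0 := fun u hu => by
    rw [dropCol_mulVec]
    exact mulVec_ne_zero_of_isUnit hQ (snoc_zero_ne_zero hu)
  obtain ⟨a, b, hab⟩ := exists_lastDiag_one (dropCol Q) hW
  obtain ⟨M, hM, h0, h1, h2⟩ := h a b
  refine ⟨M, hM, rank_eq_of_mulVec_ne_zero _ fun u hu => ?_⟩
  rw [dropCol_mulVec, ← Matrix.mulVec_mulVec, ← Matrix.mulVec_mulVec, ← dropCol_mulVec]
  exact mulVec_ne_zero_of_isUnit hP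
    (mulVec_ne_zero_of_lastDiag (hV hM) h0 h1 h2 (hW u hu) (hab u hu))

/-- Row version of `exists_dropCol_rank`, with the plane spanned by the first two rows of `P`. -/
lemma exists_dropRow_rank (hV : V ≤ J3) (h : FullDiag V)
    {P Q : Matrix (Fin 3) (Fin 3) (ZMod 2)} (hP : IsUnit P) (hQ : IsUnit Q) :
    ∃ M ∈ V, (dropRow (P * M * Q)).rank = 2 := by
  have hW : ∀ u : Fin 2 → ZMod 2, u ≠ 0 → u ᵥ* dropRow P ≠ 0 := fun u hu => by
    rw [vecMul_dropRow]
    exact vecMul_ne_zero_of_isUnit hP (snoc_zero_ne_zero hu)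
  have hrev (u : Fin 2 → ZMod 2) :
      ((dropRow P)ᵀ.submatrix Fin.rev id) *ᵥ u = (u ᵥ* dropRow P) ∘ Fin.rev := by
    rw [← Matrix.mulVec_transpose]; rfl
  obtain ⟨b, a, hab⟩ := exists_lastDiag_one ((dropRow P)ᵀ.submatrix Fin.rev id) fun u hu h0 => by
    rw [hrev] at h0
    refine hW u hu (funext fun i => ?_)
    simpa using congrFun h0 (Fin.rev i)
  obtain ⟨M, hM, h0, h1, h2⟩ := h a b
  refine ⟨M, hM, ?_⟩
  rw [← Matrix.rank_transpose]
  refine rank_eq_of_mulVec_ne_zero _ fun u hu => ?_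
  rw [Matrix.mulVec_transpose, vecMul_dropRow, ← Matrix.vecMul_vecMul, ← Matrix.vecMul_vecMul,
    ← vecMul_dropRow]
  exact vecMul_ne_zero_of_isUnit hQ
    (vecMul_ne_zero_of_lastDiag (hV hM) h0 h1 h2 (hW u hu) (hrev u ▸ hab u hu))

lemma exists_lastDiag_one_single : ∀ w : Fin 3 → ZMod 2, w ≠ 0 →
    ∃ a b : ZMod 2, lastDiag a b w = 1 := by
  unfold lastDiag
  decide +kernel

lemma reduced_of_fullDiag (hV : V ≤ J3) (h : FullDiag V) : Reduced (ZMod 2) V := by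
  refine ⟨fun x hx => ?_, ?_⟩
  · by_contra hne
    obtain ⟨a, b, hab⟩ := exists_lastDiag_one_single x hne
    obtain ⟨M, hM, h0, h1, h2⟩ := h a b
    exact mulVec_ne_zero_of_lastDiag (hV hM) h0 h1 h2 hne hab (hx M hM)
  · by_contra hne
    obtain ⟨f, hf, hle⟩ := Submodule.exists_le_ker_of_lt_top _ (lt_top_iff_ne_top.2 hne)
    -- The functional `f` is the dot product with `w`.
    obtain ⟨w, rfl⟩ := (dotProductEquiv (ZMod 2) (Fin 3)).surjective f
    have hw : w ≠ 0 := by rintro rfl; simp at hf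
    obtain ⟨b, a, hab⟩ := exists_lastDiag_one_single (w ∘ Fin.rev) fun h0 =>
      hw (funext fun i => by simpa using congrFun h0 (Fin.rev i))
    obtain ⟨M, hM, h0, h1, h2⟩ := h a b
    refine vecMul_ne_zero_of_lastDiag (hV hM) h0 h1 h2 hw hab ?_
    refine dotProduct_eq_zero _ fun x => ?_
    rw [← Matrix.dotProduct_mulVec]
    simpa using hle (Submodule.subset_span ⟨M, hM, x, rfl⟩)

/-- The diagonal `(x, y, z)` has `x + y + z = 0` in `F₂`, so one of its entries is `0`. -/
lemma det_eq_zero_of_mem_J3 {M : Matrix (Fin 3) (Fin 3) (ZMod 2)} (hM : M ∈ J3) :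
    M.det = 0 := by
  have ht : M 0 0 + M 1 1 + M 2 2 = 0 := by
    simpa [Matrix.trace, Fin.sum_univ_three] using hM.1
  rw [Matrix.det_of_isUpperTriangular fun i j hij => hM.2 i j hij, Fin.prod_univ_three]
  generalize M 0 0 = x at *
  generalize M 1 1 = y at *
  generalize M 2 2 = z at *
  revert x y z
  decide

lemma rank_le_two_of_mem_J3 {M : Matrix (Fin 3) (Fin 3) (ZMod 2)} (hM : M ∈ J3) :
    M.rank ≤ 2 := by
  obtain ⟨v, hv, hv0⟩ := Matrix.exists_mulVec_eq_zero_iff.2 (det_eq_zero_of_mem_J3 hM)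
  have hker : LinearMap.ker M.mulVecLin ≠ ⊥ := fun h =>
    hv ((Submodule.mem_bot (ZMod 2)).1 (h ▸ LinearMap.mem_ker.2 hv0))
  have hpos := Submodule.one_le_finrank_iff.2 hker
  have hsum := LinearMap.finrank_range_add_finrank_ker M.mulVecLin
  rw [Module.finrank_fin_fun] at hsum
  unfold Matrix.rank
  omega

lemma urk_of_fullDiag (hV : V ≤ J3) (h : FullDiag V) : urk V = 2 := by
  refine IsGreatest.csSup_eq ⟨?_, ?_⟩
  · obtain ⟨M, hM, hr⟩ := exists_dropCol_rank hV h isUnit_one isUnit_one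
    rw [one_mul, mul_one] at hr
    exact ⟨M, hM, le_antisymm (rank_le_two_of_mem_J3 (hV hM))
      (hr.symm.le.trans (Matrix.rank_submatrix_le M id _))⟩
  · rintro _ ⟨M, hM, rfl⟩
    exact rank_le_two_of_mem_J3 (hV hM)

/-- A triple of diagonals `(xᵢ, xᵢ + zᵢ, zᵢ)`, nonzero at the first, second and third position
respectively, spans all diagonals of this form. -/
lemma exists_combination_diag : ∀ x₁ z₁ x₂ z₂ x₃ z₃ a b : ZMod 2, x₁ = 1 → x₂ + z₂ = 1 → z₃ = 1 →
    ∃ c₁ c₂ c₃ : ZMod 2, c₁ * x₁ + c₂ * x₂ + c₃ * x₃ = a ∧ c₁ * z₁ + c₂ * z₂ + c₃ * z₃ = b := by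
  decide +kernel

lemma zmod_two_eq_one {x : ZMod 2} (h : x ≠ 0) : x = 1 := by revert x; decide

lemma J3_mid {M : Matrix (Fin 3) (Fin 3) (ZMod 2)} (hM : M ∈ J3) :
    M 1 1 = M 0 0 + M 2 2 := by
  have ht : M 0 0 + M 1 1 + M 2 2 = 0 := by
    simpa [Matrix.trace, Fin.sum_univ_three] using hM.1
  generalize M 0 0 = x at *
  generalize M 1 1 = y at *
  generalize M 2 2 = z at *
  revert x y z
  decide

/-- If no diagonal position vanishes identically on `V`, then the diagonals occurring in `V`
form a subspace of `{(a, a + b, b)}` lying in none of its three lines, hence all of it. -/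
lemma fullDiag_of_exists (hV : V ≤ J3) (h0 : ∃ M ∈ V, M 0 0 ≠ 0) (h1 : ∃ M ∈ V, M 1 1 ≠ 0)
    (h2 : ∃ M ∈ V, M 2 2 ≠ 0) : FullDiag V := by
  obtain ⟨A, hA, a0⟩ := h0
  obtain ⟨B, hB, b1⟩ := h1
  obtain ⟨C, hC, c2⟩ := h2
  intro a b
  obtain ⟨c₁, c₂, c₃, e0, e2⟩ := exists_combination_diag (A 0 0) (A 2 2) (B 0 0) (B 2 2)
    (C 0 0) (C 2 2) a b (zmod_two_eq_one a0) (J3_mid (hV hB) ▸ zmod_two_eq_one b1)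
    (zmod_two_eq_one c2)
  have hmem : c₁ • A + c₂ • B + c₃ • C ∈ V :=
    V.add_mem (V.add_mem (V.smul_mem _ hA) (V.smul_mem _ hB)) (V.smul_mem _ hC)
  refine ⟨_, hmem, ?_, ?_, ?_⟩
  · simpa using e0
  · rw [J3_mid (hV hmem), ← e0, ← e2]; simp
  · simpa using e2

end FullDiag

theorem subspace_of_J3_primitive_iff
    (V : Submodule (ZMod 2) (Matrix (Fin 3) (Fin 3) (ZMod 2))) (hV : V ≤ J3) :
    (Primitive (ZMod 2) V ∧ urk V = 2) ↔
      ∀ a b : ZMod 2, ∃ M ∈ V, M 0 0 = a ∧ M 1 1 = a + b ∧ M 2 2 = b := by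
  constructor
  · rintro ⟨⟨⟨⟨hker, hspan⟩, hcol⟩, -⟩, hr⟩
    refine fullDiag_of_exists hV ?_ ?_ ?_
    · -- Otherwise the first column of every matrix vanishes, so `e₀` is a common kernel vector.
      by_contra! h
      have := hker ![1, 0, 0] fun M hM => by
        ext i
        have z10 := (hV hM).2 1 0 (by decide)
        have z20 := (hV hM).2 2 0 (by decide)
        fin_cases i <;> simp [Matrix.mulVec, dotProduct, Fin.sum_univ_three, h M hM, z10, z20]
      exact absurd this (by decide)
    · -- Otherwise the first two columns are supported on the first row, hence have rank `≤ 1`.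
      by_contra! h
      refine hcol ⟨V, ⟨1, 1, isUnit_one, isUnit_one, by simp⟩, fun M hM => ?_⟩
      have : dropCol M = Matrix.vecMulVec ![1, 0, 0] (dropCol M 0) := by
        ext i j
        have z10 := (hV hM).2 1 0 (by decide)
        have z20 := (hV hM).2 2 0 (by decide)
        have z21 := (hV hM).2 2 1 (by decide)
        have z11 := h M hM
        change Fin 2 at j
        fin_cases i <;> fin_cases j <;> simp [dropCol, Matrix.vecMulVec_apply, *]
      rw [this, hr]
      exact Matrix.rank_vecMulVec_le _ _
    · -- Otherwise the last row of every matrix vanishes, so all column spaces lie in `y₂ = 0`.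
      by_contra! h
      have hle : Submodule.span (ZMod 2)
          {y : Fin 3 → ZMod 2 | ∃ M ∈ V, ∃ x : Fin 3 → ZMod 2, M.mulVec x = y} ≤
          LinearMap.ker (LinearMap.proj (R := ZMod 2) (φ := fun _ : Fin 3 => ZMod 2) 2) := by
        rw [Submodule.span_le]
        rintro _ ⟨M, hM, x, rfl⟩
        have z20 := (hV hM).2 2 0 (by decide)
        have z21 := (hV hM).2 2 1 (by decide)
        simp [Matrix.mulVec, dotProduct, Fin.sum_univ_three, h M hM, z20, z21]
      rw [hspan] at hle
      have := hle (Submodule.mem_top (x := ![0, 0, 1]))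
      simp at this
  · intro h
    have hr : urk V = 2 := urk_of_fullDiag hV h
    refine ⟨⟨⟨reduced_of_fullDiag hV h, ?_⟩, ?_⟩, hr⟩
    · rintro ⟨T, ⟨P, Q, hP, hQ, hT⟩, hdrop⟩
      obtain ⟨M, hM, hrank⟩ := exists_dropCol_rank hV h hP hQ
      have hMT : P * M * Q ∈ (T : Set _) := hT ▸ ⟨M, hM, rfl⟩
      have := hdrop _ hMT
      omega
    · rintro ⟨T, ⟨P, Q, hP, hQ, hT⟩, hdrop⟩
      obtain ⟨M, hM, hrank⟩ := exists_dropRow_rank hV h hP hQ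
      have hMT : P * M * Q ∈ (T : Set _) := hT ▸ ⟨M, hM, rfl⟩
      have := hdrop _ hMT
      omega
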